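/- For any M ≥ 1, any d ∈ {0, 1, …, M}, and vectors z, w ∈ ℂ^M in generic position (so that [z_i − z_j] ≠ 0 for i ≠ j, [w_k − w_l] ≠ 0 for k ≠ l, and [z_i + w_k + δ] ≠ 0 for all i, k), one has Σ_{K ⊆ {1,…,M}, |K| = d} ∏_{i∈K, j∉K} [z_i − z_j + δ]/[z_i − z_j] · ∏_{i∈K, 1≤k≤M} [z_i + w_k]/[z_i + w_k + δ] = Σ_{L ⊆ {1,…,M}, |L| = d} ∏_{k∈L, l∉L} [w_k − w_l + δ]/[w_k − w_l] · ∏_{1≤i≤M, k∈L} [w_k + z_i]/[w_k + z_i + δ], where K and L run over all d-element subsets of {1,…,M}. -/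

import Mathlib

/-!
Write `φ(x) = [x + t] / ([t] [x])` with an auxiliary parameter `t`. Expanding
`det (φ(z_i + w_j) + u φ(z_i + w_j + δ))` in powers of `u` by multilinearity in the rows gives, as
coefficient of `u ^ d`, the sum over `d`-subsets `K` of the determinants in which `z_i` is shifted
by `δ` for `i ∈ K`; expanding in the columns gives the same with the `w_k` shifted instead
(`sum_det_rows_eq_cols`). Frobenius' determinant formula (`frobenius_det`), a consequence of the
Riemann relation, evaluates each shifted determinant: it is the corresponding summand of the
theorem times a factor depending only on `d` and symmetric in `z` and `w` (`det_shift`). For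
suitable `t` this factor is nonzero and cancels.

The determinants require `[z_i + w_k] ≠ 0`. This assumption is removed by translating all `z_i` by
a common `ε` and letting `ε` tend to `0`.
-/

open Finset

/-- Shifted factorial `[x]_k = [x][x+δ]⋯[x+(k-1)δ]` with respect to the bracket `f`. -/
noncomputable def sf (f : ℂ → ℂ) (δ : ℂ) (x : ℂ) (k : ℕ) : ℂ :=
  ∏ i ∈ Finset.range k, f (x + (i : ℂ) * δ)

/-- Difference product `Δ(x) = ∏_{i<j} [x_i - x_j]`. -/
noncomputable def Del (f : ℂ → ℂ) {m : ℕ} (x : Fin m → ℂ) : ℂ :=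
  ∏ i : Fin m, ∏ j ∈ Finset.univ.filter (fun j => i < j), f (x i - x j)

/-- The multiple hypergeometric series `Φ^{m,n}_N(a; x | b; c)`. -/
noncomputable def Phi (f : ℂ → ℂ) (δ : ℂ) {m n : ℕ} (a x : Fin m → ℂ)
    (b c : Fin n → ℂ) (N : ℕ) : ℂ :=
  ∑ μ ∈ Finset.Nat.antidiagonalTuple m N,
    (Del f (fun i => x i + (μ i : ℂ) * δ) / Del f x)
      * (∏ i, ∏ j, sf f δ (x i - x j + a j) (μ i) / sf f δ (x i - x j + δ) (μ i))
      * (∏ i, ∏ k, sf f δ (x i + b k) (μ i) / sf f δ (x i + c k) (μ i))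

/-- The `μ`-th summand of the very well-poised series `E^{m,n}(a; x | s; u; v)`. -/
noncomputable def Eterm (f : ℂ → ℂ) (δ : ℂ) {m n : ℕ} (a x : Fin m → ℂ) (s : ℂ)
    (u v : Fin n → ℂ) (μ : Fin m → ℕ) : ℂ :=
  (Del f (fun i => x i + (μ i : ℂ) * δ) / Del f x)
    * (∏ i, f (x i + s + (((∑ j, μ j) + μ i : ℕ) : ℂ) * δ) / f (x i + s))
    * (∏ j, (sf f δ (s + x j) (∑ i, μ i) / sf f δ (δ + s + x j - a j) (∑ i, μ i))
        * ∏ i, sf f δ (x i - x j + a j) (μ i) / sf f δ (x i - x j + δ) (μ i))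
    * (∏ k, (sf f δ (v k) (∑ i, μ i) / sf f δ (δ + s - u k) (∑ i, μ i))
        * ∏ i, sf f δ (x i + u k) (μ i) / sf f δ (x i + δ + s - v k) (μ i))

/-- The very well-poised multiple series `E^{m,n}(a; x | s; u; v)`. -/
noncomputable def Evw (f : ℂ → ℂ) (δ : ℂ) {m n : ℕ} (a x : Fin m → ℂ) (s : ℂ)
    (u v : Fin n → ℂ) : ℂ :=
  ∑' μ : Fin m → ℕ, Eterm f δ a x s u v μ

/-- The one-dimensional very well-poised series `_{r+3}E_{r+2}(s; u_1, …, u_r)`. -/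
noncomputable def E1 (f : ℂ → ℂ) (δ : ℂ) {r : ℕ} (s : ℂ) (u : Fin r → ℂ) : ℂ :=
  ∑' k : ℕ, (f (s + 2 * (k : ℂ) * δ) / f s) * (sf f δ s k / sf f δ δ k)
    * ∏ i, sf f δ (u i) k / sf f δ (δ + s - u i) k


theorem Del_succ (f : ℂ → ℂ) {n : ℕ} (x : Fin (n + 1) → ℂ) :
    Del f x = (∏ j : Fin n, f (x 0 - x j.succ)) * Del f (fun i : Fin n => x i.succ) := by
  simp only [Del, Finset.prod_filter, Fin.prod_univ_succ, Fin.succ_pos, Fin.succ_lt_succ_iff,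
    Fin.not_lt_zero, if_true, if_false, one_mul]

/-- Schur complement of the top-left entry. -/
theorem det_schur {n : ℕ} (A : Matrix (Fin (n + 1)) (Fin (n + 1)) ℂ) (h : A 0 0 ≠ 0) :
    A.det = A 0 0 * Matrix.det (Matrix.of fun i j : Fin n =>
      A i.succ j.succ - A i.succ 0 / A 0 0 * A 0 j.succ) := by
  let c : Fin (n + 1) → ℂ := fun i => if i = 0 then 0 else A i 0 / A 0 0
  let B : Matrix (Fin (n + 1)) (Fin (n + 1)) ℂ := Matrix.of fun i j => A i j - c i * A 0 j
  have hAB : A.det = B.det := by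
    refine Matrix.det_eq_of_forall_row_eq_smul_add_const c 0 (by simp [c]) fun i j => ?_
    simp [B, c]
  rw [hAB, Matrix.det_succ_column_zero, Fin.sum_univ_succ, Finset.sum_eq_zero, add_zero]
  · have hS : B.submatrix (Fin.succAbove 0) Fin.succ = Matrix.of fun i j : Fin n =>
        A i.succ j.succ - A i.succ 0 / A 0 0 * A 0 j.succ := by
      ext i j
      simp [B, c, Fin.succ_ne_zero]
    rw [hS]
    simp [B, c]
  · intro i _
    have : B i.succ 0 = 0 := by simp [B, c, Fin.succ_ne_zero, div_mul_cancel₀ _ h]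
    simp [this]

/-- Frobenius' elliptic Cauchy determinant. By the Riemann relation, the Schur complement of the
top-left entry of `[x_i + y_j + t] / ([t] [x_i + y_j])` is, up to row and column factors, a matrix of
the same shape with `t` replaced by `t + x_0 + y_0`; the hypothesis on partial sums keeps every
pivot nonzero in the induction. -/
theorem frobenius_det (f : ℂ → ℂ) (hodd : ∀ t : ℂ, f (-t) = -f t)
    (hRiem : ∀ x y u v : ℂ,
      f (x + y) * f (x - y) * f (u + v) * f (u - v) =
        f (x + u) * f (x - u) * f (y + v) * f (y - v)
          - f (x + v) * f (x - v) * f (y + u) * f (y - u)) :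
    ∀ (n : ℕ) (x y : Fin n → ℂ) (t : ℂ), (∀ i j, f (x i + y j) ≠ 0) →
      (∀ s : Finset (Fin n), f (t + ∑ i ∈ s, (x i + y i)) ≠ 0) →
      Matrix.det (Matrix.of fun i j => f (x i + y j + t) / (f t * f (x i + y j))) =
        f (t + ∑ i, (x i + y i)) / f t * (Del f x * Del f y) / ∏ i, ∏ j, f (x i + y j) := by
  intro n
  induction n with
  | zero =>
    intro x y t _ ht
    have h0 : f t ≠ 0 := by simpa using ht ∅
    simp [Del, h0]
  | succ n ih =>
    intro x y t hxy ht
    have h0 : f t ≠ 0 := by simpa using ht ∅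
    have h1 : f (t + (x 0 + y 0)) ≠ 0 := by simpa using ht {0}
    have h1' : f (x 0 + y 0 + t) ≠ 0 := by rwa [add_comm]
    have key : ∀ i j : Fin n,
        f (x i.succ + y j.succ + t) / (f t * f (x i.succ + y j.succ))
          - f (x i.succ + y 0 + t) / (f t * f (x i.succ + y 0))
            / (f (x 0 + y 0 + t) / (f t * f (x 0 + y 0)))
            * (f (x 0 + y j.succ + t) / (f t * f (x 0 + y j.succ)))
        = f (x 0 - x i.succ) / f (x i.succ + y 0) *
            (f (y 0 - y j.succ) / f (x 0 + y j.succ) *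
            (f (x i.succ + y j.succ + (t + (x 0 + y 0))) /
              (f (t + (x 0 + y 0)) * f (x i.succ + y j.succ)))) := by
      intro i j
      have a1 := hxy i.succ j.succ
      have a2 := hxy i.succ 0
      have a3 := hxy 0 j.succ
      have a4 := hxy 0 0
      have e1 : f (x 0 - x i.succ) = - f (x i.succ - x 0) := by rw [← hodd]; ring_nf
      have e2 : f (y 0 - y j.succ) = - f (y j.succ - y 0) := by rw [← hodd]; ring_nf
      have e3 : f (t + (x 0 + y 0)) = f (x 0 + y 0 + t) := by rw [add_comm]
      -- the four half-sums whose sums and differences are the arguments occurring here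
      have R := hRiem ((x i.succ + y j.succ + x 0 + y 0) / 2 + t)
        ((x i.succ + y j.succ + x 0 + y 0) / 2)
        ((x i.succ - x 0 + y j.succ - y 0) / 2)
        ((x i.succ - x 0 - y j.succ + y 0) / 2)
      rw [e1, e2, e3]
      generalize x i.succ = a at *
      generalize y j.succ = b at *
      generalize x 0 = c at *
      generalize y 0 = d at *
      rw [show (a + b + c + d) / 2 + t + (a + b + c + d) / 2 = a + b + (t + (c + d)) by ring,
        show (a + b + c + d) / 2 + t - (a + b + c + d) / 2 = t by ring,
        show (a - c + b - d) / 2 + (a - c - b + d) / 2 = a - c by ring,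
        show (a - c + b - d) / 2 - (a - c - b + d) / 2 = b - d by ring,
        show (a + b + c + d) / 2 + t + (a - c + b - d) / 2 = a + b + t by ring,
        show (a + b + c + d) / 2 + t - (a - c + b - d) / 2 = c + d + t by ring,
        show (a + b + c + d) / 2 + (a - c - b + d) / 2 = a + d by ring,
        show (a + b + c + d) / 2 - (a - c - b + d) / 2 = c + b by ring,
        show (a + b + c + d) / 2 + t + (a - c - b + d) / 2 = a + d + t by ring,
        show (a + b + c + d) / 2 + t - (a - c - b + d) / 2 = c + b + t by ring,
        show (a + b + c + d) / 2 + (a - c + b - d) / 2 = a + b by ring,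
        show (a + b + c + d) / 2 - (a - c + b - d) / 2 = c + d by ring] at R
      generalize f (a + b + (t + (c + d))) = F1 at *
      generalize f (c + d + t) = F2 at *
      generalize f (c + b + t) = F3 at *
      generalize f (a + d + t) = F4 at *
      generalize f (a + b + t) = F5 at *
      field_simp
      linear_combination -R
    have a4 := hxy 0 0
    have hm := ih (fun i => x i.succ) (fun j => y j.succ) (t + (x 0 + y 0))
      (fun i j => hxy _ _) (fun s => by
        have := ht (insert 0 (s.map (Fin.succEmb n)))
        rw [Finset.sum_insert (by simp [Fin.succ_ne_zero]), Finset.sum_map] at this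
        simpa [add_assoc] using this)
    rw [det_schur _ (div_ne_zero h1' (mul_ne_zero h0 a4))]
    have hB : (Matrix.of fun i j : Fin n =>
        f (x i.succ + y j.succ + t) / (f t * f (x i.succ + y j.succ))
          - f (x i.succ + y 0 + t) / (f t * f (x i.succ + y 0))
            / (f (x 0 + y 0 + t) / (f t * f (x 0 + y 0)))
            * (f (x 0 + y j.succ + t) / (f t * f (x 0 + y j.succ))))
        = Matrix.of fun i j : Fin n => f (x 0 - x i.succ) / f (x i.succ + y 0) *
            (Matrix.of fun i j : Fin n => f (y 0 - y j.succ) / f (x 0 + y j.succ) *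
            (Matrix.of fun i j : Fin n =>
              f (x i.succ + y j.succ + (t + (x 0 + y 0))) /
            (f (t + (x 0 + y 0)) * f (x i.succ + y j.succ))) i j) i j := by
      ext i j
      exact key i j
    simp only [Matrix.of_apply]
    rw [hB, Matrix.det_mul_column (fun i : Fin n => f (x 0 - x i.succ) / f (x i.succ + y 0)),
      Matrix.det_mul_row (fun j : Fin n => f (y 0 - y j.succ) / f (x 0 + y j.succ)), hm,
      Del_succ, Del_succ]
    simp only [Fin.prod_univ_succ, Fin.sum_univ_succ, Finset.prod_div_distrib,
      Finset.prod_mul_distrib]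
    have p1 : ∏ i : Fin n, f (x i.succ + y 0) ≠ 0 := Finset.prod_ne_zero_iff.2 fun i _ => hxy _ _
    have p2 : ∏ i : Fin n, f (x 0 + y i.succ) ≠ 0 := Finset.prod_ne_zero_iff.2 fun i _ => hxy _ _
    have p3 : ∏ i : Fin n, ∏ j : Fin n, f (x i.succ + y j.succ) ≠ 0 :=
      Finset.prod_ne_zero_iff.2 fun i _ => Finset.prod_ne_zero_iff.2 fun j _ => hxy _ _
    rw [show x 0 + y 0 + t = t + (x 0 + y 0) by ring, add_assoc t]
    field_simp

/-- Both sides are the coefficient of `u ^ d` in `det (A + u B)`, expanded by rows and by columns.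
In the Leibniz expansion, the term of a permutation `σ` matches the row set `K` with the column set
`σ⁻¹ K`. -/
theorem sum_det_rows_eq_cols {n : ℕ} (A B : Matrix (Fin n) (Fin n) ℂ) (d : ℕ) :
    ∑ K ∈ powersetCard d (univ : Finset (Fin n)),
        Matrix.det (Matrix.of fun i j => if i ∈ K then B i j else A i j) =
      ∑ L ∈ powersetCard d (univ : Finset (Fin n)),
        Matrix.det (Matrix.of fun i j => if j ∈ L then B i j else A i j) := by
  simp only [Matrix.det_apply, Matrix.of_apply]
  rw [sum_comm, sum_comm (s := powersetCard d univ)]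
  refine sum_congr rfl fun σ _ => ?_
  refine sum_equiv σ.finsetCongr.symm (fun K => ?_) (fun K _ => ?_)
  · simp [mem_powersetCard]
  · simp [Equiv.finsetCongr]

/-- A pair of indices contributes to the quotient of difference products only if exactly one of the
two lies in `K`; oddness of the bracket makes this contribution independent of their order. -/
theorem Del_shift (f : ℂ → ℂ) (hodd : ∀ t : ℂ, f (-t) = -f t) {n : ℕ} (z : Fin n → ℂ) (δ : ℂ)
    (hz : ∀ i j, i ≠ j → f (z i - z j) ≠ 0) (K : Finset (Fin n)) :
    Del f (fun i => if i ∈ K then z i + δ else z i) =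
      Del f z * ∏ i ∈ K, ∏ j ∈ Kᶜ, f (z i - z j + δ) / f (z i - z j) := by
  set r : Fin n → Fin n → ℂ := fun i j =>
    if i ∈ K ∧ j ∉ K then f (z i - z j + δ) / f (z i - z j) else 1 with hr
  have h1 : ∏ i ∈ K, ∏ j ∈ Kᶜ, f (z i - z j + δ) / f (z i - z j) = ∏ i, ∏ j, r i j := by
    rw [← Finset.prod_subset (Finset.subset_univ K)]
    · refine prod_congr rfl fun i hi => ?_
      rw [← Finset.prod_subset (Finset.subset_univ Kᶜ)]
      · refine prod_congr rfl fun j hj => ?_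
        simp [hr, hi, mem_compl.1 hj]
      · intro j _ hj
        simp at hj
        simp [hr, hj]
    · intro i _ hi
      simp [hr, hi]
  have h2 : ∏ i, ∏ j, r i j = ∏ i, ∏ j ∈ univ.filter (fun j => i < j), r i j * r j i := by
    have e : ∀ i j, r i j = (if i < j then r i j else 1) * (if j < i then r i j else 1) := by
      intro i j
      rcases lt_trichotomy i j with h | h | h
      · simp [h, h.not_gt]
      · subst h; simp [hr]
      · simp [h, h.not_gt]
    simp only [prod_filter]
    calc ∏ i, ∏ j, r i j
        = (∏ i, ∏ j, if i < j then r i j else 1) * ∏ i, ∏ j, if j < i then r i j else 1 := by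
          simp only [← prod_mul_distrib]
          exact prod_congr rfl fun i _ => prod_congr rfl fun j _ => e i j
      _ = _ := by
          rw [prod_comm (f := fun i j => if j < i then r i j else 1)]
          simp only [← prod_mul_distrib]
          refine prod_congr rfl fun i _ => prod_congr rfl fun j _ => ?_
          split_ifs <;> simp
  rw [h1, h2, Del, Del]
  simp only [← prod_mul_distrib]
  refine prod_congr rfl fun i _ => prod_congr rfl fun j hj => ?_
  have hij : i < j := by simpa using hj
  have n1 := hz i j hij.ne
  have n2 := hz j i hij.ne'
  by_cases hi : i ∈ K <;> by_cases hj : j ∈ K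
  · simp [hr, hi, hj]
  · simp only [hr, hi, hj, if_true, if_false, not_true, not_false_iff, and_true, and_false,
      mul_one]
    rw [mul_div_cancel₀ _ n1]; ring_nf
  · have e1 : f (z i - (z j + δ)) = - f (z j - z i + δ) := by rw [← hodd]; ring_nf
    have e2 : f (z i - z j) = - f (z j - z i) := by rw [← hodd]; ring_nf
    simp only [hr, hi, hj, if_true, if_false, not_true, not_false_iff, and_true, and_false,
      one_mul]
    rw [e1, e2]; field_simp
  · simp [hr, hi, hj]

/-- The Frobenius determinant with the variables `z_i`, `i ∈ K`, shifted by `δ` is the summand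
indexed by `K` of the symmetric sum, times a factor that depends on `K` only through its
cardinality. -/
theorem det_shift (f : ℂ → ℂ) (hodd : ∀ t : ℂ, f (-t) = -f t)
    (hRiem : ∀ x y u v : ℂ,
      f (x + y) * f (x - y) * f (u + v) * f (u - v) =
        f (x + u) * f (x - u) * f (y + v) * f (y - v)
          - f (x + v) * f (x - v) * f (y + u) * f (y - u))
    (δ : ℂ) {n : ℕ} (z w : Fin n → ℂ) (hz : ∀ i j, i ≠ j → f (z i - z j) ≠ 0)
    (hzw0 : ∀ i k, f (z i + w k) ≠ 0) (hzw : ∀ i k, f (z i + w k + δ) ≠ 0) (t : ℂ)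
    (K : Finset (Fin n))
    (ht : ∀ s : Finset (Fin n),
      f (t + ∑ i ∈ s, ((if i ∈ K then z i + δ else z i) + w i)) ≠ 0) :
    Matrix.det (Matrix.of fun i j =>
        if i ∈ K then f (z i + w j + δ + t) / (f t * f (z i + w j + δ))
        else f (z i + w j + t) / (f t * f (z i + w j))) =
      f (t + ∑ i, (z i + w i) + (K.card : ℂ) * δ) / f t * (Del f z * Del f w)
          / (∏ i, ∏ j, f (z i + w j)) *
        ((∏ i ∈ K, ∏ j ∈ Kᶜ, f (z i - z j + δ) / f (z i - z j)) *
          ∏ i ∈ K, ∏ k, f (z i + w k) / f (z i + w k + δ)) := by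
  have hF := frobenius_det f hodd hRiem n (fun i => if i ∈ K then z i + δ else z i) w t
    (fun i j => by
      by_cases hi : i ∈ K
      · simpa [hi, add_right_comm] using hzw i j
      · simpa [hi] using hzw0 i j) ht
  have hM : (Matrix.of fun i j =>
        if i ∈ K then f (z i + w j + δ + t) / (f t * f (z i + w j + δ))
        else f (z i + w j + t) / (f t * f (z i + w j))) =
      (Matrix.of fun i j => f ((if i ∈ K then z i + δ else z i) + w j + t) /
        (f t * f ((if i ∈ K then z i + δ else z i) + w j))) := by
    ext i j
    by_cases hi : i ∈ K
    · simp [hi, add_right_comm (z i) (w j) δ]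
    · simp [hi]
  have hS : t + ∑ i, ((if i ∈ K then z i + δ else z i) + w i)
      = t + ∑ i, (z i + w i) + (K.card : ℂ) * δ := by
    have : ∀ i, ((if i ∈ K then z i + δ else z i) + w i)
        = (z i + w i) + if i ∈ K then δ else 0 := by
      intro i; split_ifs <;> ring
    simp only [this, sum_add_distrib, sum_ite_mem, univ_inter, sum_const, nsmul_eq_mul]
    ring
  have hP : (∏ i, ∏ j, f (z i + w j)) = (∏ i ∈ K, ∏ k, f (z i + w k) / f (z i + w k + δ)) *
      ∏ i, ∏ j, f ((if i ∈ K then z i + δ else z i) + w j) := by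
    rw [← Fintype.prod_ite_mem K (fun i => ∏ k, f (z i + w k) / f (z i + w k + δ)),
      ← prod_mul_distrib]
    refine prod_congr rfl fun i _ => ?_
    by_cases hi : i ∈ K
    · simp only [hi, if_true, ← prod_mul_distrib]
      refine prod_congr rfl fun j _ => ?_
      rw [add_right_comm (z i) δ (w j), div_mul_cancel₀ _ (hzw i j)]
    · simp [hi]
  have p0 : (∏ i, ∏ j, f (z i + w j)) ≠ 0 :=
    prod_ne_zero_iff.2 fun i _ => prod_ne_zero_iff.2 fun j _ => hzw0 i j
  rw [hM, hF, hS, Del_shift f hodd z δ hz K]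
  rw [hP] at p0 ⊢
  have p1 := left_ne_zero_of_mul p0
  have p2 := right_ne_zero_of_mul p0
  field_simp

/-- Zeros of a nonzero entire function are isolated. -/
theorem eventually_translate_ne_zero (f : ℂ → ℂ) (hf : f ≠ 0) (hdiff : Differentiable ℂ f)
    (c : ℂ) : ∀ᶠ t in nhdsWithin (0 : ℂ) {0}ᶜ, f (t + c) ≠ 0 := by
  have hg : Differentiable ℂ (fun t => f (t + c)) := by fun_prop
  have ha : AnalyticOnNhd ℂ (fun t => f (t + c)) Set.univ :=
    fun t _ => hg.analyticAt t
  rcases (ha 0 trivial).eventually_eq_zero_or_eventually_ne_zero with h | h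
  · exfalso
    apply hf
    have := ha.eqOn_zero_of_preconnected_of_eventuallyEq_zero isPreconnected_univ trivial h
    ext t
    simpa using this (Set.mem_univ (t - c))
  · exact h

/-- The identity under the additional assumption that no `[z_i + w_k]` vanishes. -/
theorem F_symm_generic (f : ℂ → ℂ) (hf : f ≠ 0) (hodd : ∀ t : ℂ, f (-t) = -f t)
    (hdiff : Differentiable ℂ f)
    (hRiem : ∀ x y u v : ℂ,
      f (x + y) * f (x - y) * f (u + v) * f (u - v) =
        f (x + u) * f (x - u) * f (y + v) * f (y - v)
          - f (x + v) * f (x - v) * f (y + u) * f (y - u))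
    (δ : ℂ) (M d : ℕ) (z w : Fin M → ℂ)
    (hz : ∀ i j, i ≠ j → f (z i - z j) ≠ 0)
    (hw : ∀ i j, i ≠ j → f (w i - w j) ≠ 0)
    (hzw0 : ∀ i k, f (z i + w k) ≠ 0)
    (hzw : ∀ i k, f (z i + w k + δ) ≠ 0) :
    (∑ K ∈ Finset.powersetCard d (Finset.univ : Finset (Fin M)),
        (∏ i ∈ K, ∏ j ∈ Kᶜ, f (z i - z j + δ) / f (z i - z j)) *
          ∏ i ∈ K, ∏ k, f (z i + w k) / f (z i + w k + δ)) =
      ∑ L ∈ Finset.powersetCard d (Finset.univ : Finset (Fin M)),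
        (∏ k ∈ L, ∏ l ∈ Lᶜ, f (w k - w l + δ) / f (w k - w l)) *
          ∏ i, ∏ k ∈ L, f (w k + z i) / f (w k + z i + δ) := by
  -- `t` is an auxiliary parameter, chosen so that all pivots and the common factor are nonzero
  have hev : ∀ᶠ t in nhdsWithin (0 : ℂ) {0}ᶜ, f (t + 0) ≠ 0 ∧
      f (t + (∑ i, (z i + w i) + (d : ℂ) * δ)) ≠ 0 ∧
      (∀ K s : Finset (Fin M), f (t + ∑ i ∈ s, ((if i ∈ K then z i + δ else z i) + w i)) ≠ 0) ∧
      (∀ K s : Finset (Fin M), f (t + ∑ i ∈ s, ((if i ∈ K then w i + δ else w i) + z i)) ≠ 0) := by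
    simp only [Filter.eventually_and, Filter.eventually_all]
    exact ⟨eventually_translate_ne_zero f hf hdiff _, eventually_translate_ne_zero f hf hdiff _,
      fun _ _ => eventually_translate_ne_zero f hf hdiff _,
      fun _ _ => eventually_translate_ne_zero f hf hdiff _⟩
  obtain ⟨t, ht0, htd, h1, h2⟩ := hev.exists
  rw [add_zero] at ht0
  rw [← add_assoc] at htd
  have hsym := sum_det_rows_eq_cols
    (Matrix.of fun i j => f (z i + w j + t) / (f t * f (z i + w j)))
    (Matrix.of fun i j => f (z i + w j + δ + t) / (f t * f (z i + w j + δ))) d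
  simp only [Matrix.of_apply] at hsym
  set C := f (t + ∑ i, (z i + w i) + (d : ℂ) * δ) / f t * (Del f z * Del f w)
          / (∏ i, ∏ j, f (z i + w j)) with hC
  have hDel : ∀ x : Fin M → ℂ, (∀ i j, i ≠ j → f (x i - x j) ≠ 0) → Del f x ≠ 0 := by
    intro x hx
    exact prod_ne_zero_iff.2 fun i _ => prod_ne_zero_iff.2 fun j hj =>
      hx i j (by simpa using hj : i < j).ne
  have hC0 : C ≠ 0 := by
    refine div_ne_zero (mul_ne_zero (div_ne_zero htd ht0)
      (mul_ne_zero (hDel z hz) (hDel w hw))) ?_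
    exact prod_ne_zero_iff.2 fun i _ => prod_ne_zero_iff.2 fun j _ => hzw0 i j
  apply mul_left_cancel₀ hC0
  rw [mul_sum, mul_sum]
  refine Eq.trans ?_ (hsym.trans ?_)
  · refine sum_congr rfl fun K hK => ?_
    rw [det_shift f hodd hRiem δ z w hz hzw0 hzw t K (h1 K), (mem_powersetCard.1 hK).2]
  · refine sum_congr rfl fun L hL => ?_
    have := det_shift f hodd hRiem δ w z hw (fun i k => by rw [add_comm]; exact hzw0 k i)
      (fun i k => by rw [add_comm (w i)]; exact hzw k i) t L (h2 L)
    rw [← Matrix.det_transpose]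
    refine Eq.trans ?_ (this.trans ?_)
    · congr 1
      ext i j
      simp [add_comm (w i) (z j)]
    · rw [(mem_powersetCard.1 hL).2, hC, prod_comm (s := L) (t := univ),
        prod_comm (f := fun i j => f (w i + z j)), mul_comm (Del f w)]
      simp only [add_comm (w _) (z _)]

/-- Theorem 1.3: the coefficient of `u^d` in `F(z|w;u) = F(w|z;u)`, i.e. the sum over
`d`-subsets `K`, `L` of `{1,…,M}`. -/
theorem F_symm_coefficients
    (f : ℂ → ℂ) (hf : f ≠ 0) (hodd : ∀ t : ℂ, f (-t) = -f t) (hdiff : Differentiable ℂ f)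
    (hRiem : ∀ x y u v : ℂ,
      f (x + y) * f (x - y) * f (u + v) * f (u - v) =
        f (x + u) * f (x - u) * f (y + v) * f (y - v)
          - f (x + v) * f (x - v) * f (y + u) * f (y - u))
    (δ : ℂ) (hδ : ∀ k : ℤ, k ≠ 0 → f ((k : ℂ) * δ) ≠ 0)
    (M : ℕ) (hM : 1 ≤ M) (d : ℕ) (hd : d ≤ M) (z w : Fin M → ℂ)
    (hz : ∀ i j, i ≠ j → f (z i - z j) ≠ 0)
    (hw : ∀ i j, i ≠ j → f (w i - w j) ≠ 0)
    (hzw : ∀ i k, f (z i + w k + δ) ≠ 0) :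
    (∑ K ∈ Finset.powersetCard d (Finset.univ : Finset (Fin M)),
        (∏ i ∈ K, ∏ j ∈ Kᶜ, f (z i - z j + δ) / f (z i - z j)) *
          ∏ i ∈ K, ∏ k, f (z i + w k) / f (z i + w k + δ)) =
      ∑ L ∈ Finset.powersetCard d (Finset.univ : Finset (Fin M)),
        (∏ k ∈ L, ∏ l ∈ Lᶜ, f (w k - w l + δ) / f (w k - w l)) *
          ∏ i, ∏ k ∈ L, f (w k + z i) / f (w k + z i + δ) := by
  -- Translating all `z_i` by the same small `ε ≠ 0` preserves their differences and makes every
  -- `[z_i + w_k]` nonzero; both sides are continuous in `ε` at `0`.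
  have hne : ∀ᶠ ε in nhdsWithin (0 : ℂ) {0}ᶜ,
      (∀ i k, f (ε + (z i + w k)) ≠ 0) ∧ ∀ i k, f (ε + (z i + w k + δ)) ≠ 0 := by
    simp only [Filter.eventually_and, Filter.eventually_all]
    exact ⟨fun _ _ => eventually_translate_ne_zero f hf hdiff _,
      fun _ _ => eventually_translate_ne_zero f hf hdiff _⟩
  have hc := hdiff.continuous
  have hzw' : ∀ i k, f (w k + z i + δ) ≠ 0 := fun i k => by rw [add_comm (w k)]; exact hzw i k
  have cl : ContinuousAt (fun ε : ℂ =>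
      ∑ K ∈ Finset.powersetCard d (Finset.univ : Finset (Fin M)),
        (∏ i ∈ K, ∏ j ∈ Kᶜ, f (z i - z j + δ) / f (z i - z j)) *
          ∏ i ∈ K, ∏ k, f (z i + ε + w k) / f (z i + ε + w k + δ)) 0 := by
    refine tendsto_finsetSum _ fun K _ => ?_
    refine tendsto_const_nhds.mul ?_
    refine tendsto_finsetProd _ fun i _ => tendsto_finsetProd _ fun k _ => ?_
    exact ContinuousAt.div (by fun_prop) (by fun_prop) (by simpa using hzw i k)
  have cr : ContinuousAt (fun ε : ℂ =>
      ∑ L ∈ Finset.powersetCard d (Finset.univ : Finset (Fin M)),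
        (∏ k ∈ L, ∏ l ∈ Lᶜ, f (w k - w l + δ) / f (w k - w l)) *
          ∏ i, ∏ k ∈ L, f (w k + (z i + ε)) / f (w k + (z i + ε) + δ)) 0 := by
    refine tendsto_finsetSum _ fun K _ => ?_
    refine tendsto_const_nhds.mul ?_
    refine tendsto_finsetProd _ fun i _ => tendsto_finsetProd _ fun k _ => ?_
    exact ContinuousAt.div (by fun_prop) (by fun_prop) (by simpa using hzw' i k)
  have h := tendsto_nhds_unique_of_eventuallyEq
    (cl.tendsto.mono_left (nhdsWithin_le_nhds (s := {0}ᶜ)))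
    (cr.tendsto.mono_left (nhdsWithin_le_nhds (s := {0}ᶜ))) (by
      filter_upwards [hne] with ε hε
      have := F_symm_generic f hf hodd hdiff hRiem δ M d (fun i => z i + ε) w
        (fun i j hij => by simpa using hz i j hij) hw
        (fun i k => by rw [show z i + ε + w k = ε + (z i + w k) by ring]; exact hε.1 i k)
        (fun i k => by
          rw [show z i + ε + w k + δ = ε + (z i + w k + δ) by ring]; exact hε.2 i k)
      simpa only [add_sub_add_right_eq_sub] using this)
  simpa only [add_zero] using h
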